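/- arXiv:2103.03288 — 3 statements merged into one kernel-verified Lean document; each statement's English description precedes it below -/
import Mathlib

section
/- The one-step throughput is maximized at the perfectly balanced center state: for every a ∈ B, ψ(a) ≤ ψ(C/2); equivalently, ψ(C/2) = max_{a ∈ B} ψ(a). -/
/-!
A circulation `f` feasible at `a` satisfies `Ru f = Rd f`, and this common vector is at most both
`a` and `C - a`, hence at most their average `C / 2`. So every flow admissible at `a` is admissible
at the center, and the suprema compare as soon as the admissible throughputs at the center are
bounded. They are bounded when every path uses some channel, since that channel caps the flow on the
path. If some path uses no channel at all, its flow is unconstrained, the throughputs at `a` are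
unbounded, and `psi` at `a` takes the junk value `0`, which is at most any supremum of nonnegative
reals.
-/

open Finset

noncomputable section

variable {E P : Type*}

/-- The balance state space `B`. -/
def Bspace (C : E → ℝ) : Set (E → ℝ) :=
  {b | ∀ i, 0 ≤ b i ∧ b i ≤ C i}

/-- The interior balance states `B₊`. -/
def BInterior (C : E → ℝ) : Set (E → ℝ) :=
  {b | ∀ i, 0 < b i ∧ b i < C i}

/-- A flow `f` is feasible at state `b`: `f ≥ 0`, `R̄ f ≤ b`, `R_ f ≤ C - b`. -/
def Feas [Fintype P] (C : E → ℝ) (Ru Rd : Matrix E P ℝ) (b : E → ℝ) (f : P → ℝ) : Prop :=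
  (∀ p, 0 ≤ f p) ∧ (∀ i, Ru.mulVec f i ≤ b i) ∧ (∀ i, Rd.mulVec f i ≤ C i - b i)

/-- `fs` is a feasible flow sequence from `b`: each `fs j` is feasible at the state
obtained from `b` by sending the previous flows. -/
def FeasSeq [Fintype P] (C : E → ℝ) (Ru Rd : Matrix E P ℝ) (b : E → ℝ) {k : ℕ}
    (fs : Fin k → P → ℝ) : Prop :=
  ∀ j : Fin k,
    Feas C Ru Rd
      (b - (Ru - Rd).mulVec (∑ j' ∈ Finset.univ.filter (fun j' => j' < j), fs j')) (fs j)

/-- The set `X_b` of states reachable from `b` via feasible flow sequences. -/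
def Reach [Fintype P] (C : E → ℝ) (Ru Rd : Matrix E P ℝ) (b : E → ℝ) : Set (E → ℝ) :=
  {b' | ∃ (k : ℕ) (fs : Fin k → P → ℝ), FeasSeq C Ru Rd b fs ∧
    b' = b - (Ru - Rd).mulVec (∑ j, fs j)}

/-- The set `F_b` of achievable flows from `b`: sums of feasible flow sequences from `b`. -/
def Flows [Fintype P] (C : E → ℝ) (Ru Rd : Matrix E P ℝ) (b : E → ℝ) : Set (P → ℝ) :=
  {f | ∃ (k : ℕ) (fs : Fin k → P → ℝ), FeasSeq C Ru Rd b fs ∧ f = ∑ j, fs j}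

/-- The deadlocked channel set `L_b`. -/
def Deadlocked [Fintype P] (C : E → ℝ) (Ru Rd : Matrix E P ℝ) (b : E → ℝ) : Set E :=
  {i | ∀ f ∈ Flows C Ru Rd b, (Ru - Rd).mulVec f i = 0}

/-- The set `D_b` of feasible directions at `b`. -/
def Dirs [Fintype P] (C : E → ℝ) (Ru Rd : Matrix E P ℝ) (b : E → ℝ) : Set (E → ℝ) :=
  {ξ | ξ = 0 ∨ ∃ t : ℝ, 0 < t ∧ b + t • ξ ∈ Reach C Ru Rd b}

/-- The one-step throughput `ψ(b)`. -/
def psi [Fintype P] (C : E → ℝ) (Ru Rd : Matrix E P ℝ) (b : E → ℝ) : ℝ :=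
  sSup {s | ∃ f : P → ℝ, (∀ p, 0 ≤ f p) ∧ (∀ i, Ru.mulVec f i ≤ b i) ∧
    (∀ i, Rd.mulVec f i ≤ C i - b i) ∧ (Ru - Rd).mulVec f = 0 ∧ s = ∑ p, f p}

/-- The steady-state throughput `φ(b) = sup_{a ∈ X_b} ψ(a)`. -/
def phi [Fintype P] (C : E → ℝ) (Ru Rd : Matrix E P ℝ) (b : E → ℝ) : ℝ :=
  sSup {s | ∃ a ∈ Reach C Ru Rd b, s = psi C Ru Rd a}

/-- A channel used by `p`, in the direction recorded by `R`, caps the flow on `p`. -/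
lemma flow_le_mulVec [Fintype P] {R : Matrix E P ℝ} (h01 : ∀ i p, R i p = 0 ∨ R i p = 1)
    {f : P → ℝ} (hf : ∀ p, 0 ≤ f p) {i : E} {p : P} (hp : R i p ≠ 0) :
    f p ≤ R.mulVec f i := by
  have h1 : R i p = 1 := (h01 i p).resolve_left hp
  have hnn : ∀ q ∈ (Finset.univ : Finset P), 0 ≤ R i q * f q := fun q _ => by
    rcases h01 i q with h | h <;> simp [h, hf q]
  simpa [h1, Matrix.mulVec, dotProduct] using Finset.single_le_sum hnn (Finset.mem_univ p)

/-- A path that uses no channel makes the throughput unbounded, so `psi` is the supremum of an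
unbounded set of reals, which is `0` by convention. -/
lemma psi_eq_zero_of_free_path [Fintype P] {C : E → ℝ} {Ru Rd : Matrix E P ℝ} {a : E → ℝ}
    (ha : a ∈ Bspace C) {p : P} (hp : ∀ i, Ru i p = 0 ∧ Rd i p = 0) :
    psi C Ru Rd a = 0 := by
  classical
  refine Real.sSup_of_not_bddAbove ?_
  rintro ⟨M, hM⟩
  have hu : Ru.mulVec (Pi.single p (|M| + 1)) = 0 := by
    ext i; simp [Matrix.mulVec_single, (hp i).1]
  have hd : Rd.mulVec (Pi.single p (|M| + 1)) = 0 := by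
    ext i; simp [Matrix.mulVec_single, (hp i).2]
  have hmem : |M| + 1 ≤ M := by
    refine hM ⟨Pi.single p (|M| + 1), fun q => ?_, fun i => ?_, fun i => ?_, ?_, ?_⟩
    · have h0 : (0 : P → ℝ) ≤ Pi.single p (|M| + 1) := Pi.single_nonneg.2 (by positivity)
      exact h0 q
    · simpa [hu] using (ha i).1
    · simpa [hd] using (ha i).2
    · rw [Matrix.sub_mulVec, hu, hd, sub_zero]
    · simp
  linarith [le_abs_self M]

/-- The one-step throughput is maximized at the perfectly balanced center
state: for every `a ∈ B`, `ψ(a) ≤ ψ(C/2)`. -/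
theorem psi_le_psi_center [Fintype E] [Fintype P]
    (C : E → ℝ) (hC : ∀ i, 0 < C i) (Ru Rd : Matrix E P ℝ)
    (h01u : ∀ i p, Ru i p = 0 ∨ Ru i p = 1) (h01d : ∀ i p, Rd i p = 0 ∨ Rd i p = 1) :
    ∀ a ∈ Bspace C, psi C Ru Rd a ≤ psi C Ru Rd (fun i => C i / 2) := by
  intro a ha
  by_cases hfree : ∃ p, ∀ i, Ru i p = 0 ∧ Rd i p = 0
  · obtain ⟨p, hp⟩ := hfree
    rw [psi_eq_zero_of_free_path ha hp]
    refine Real.sSup_nonneg ?_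
    rintro s ⟨f, hf, -, -, -, rfl⟩
    exact Finset.sum_nonneg fun q _ => hf q
  · push Not at hfree
    refine csSup_le_csSup ?_ ?_ ?_
    · refine ⟨∑ _p : P, ∑ i, C i, ?_⟩
      rintro s ⟨f, hf, hu, hd, -, rfl⟩
      refine Finset.sum_le_sum fun p _ => ?_
      obtain ⟨i, hi⟩ := hfree p
      have hCi : C i ≤ ∑ j, C j :=
        Finset.single_le_sum (fun j _ => (hC j).le) (Finset.mem_univ i)
      have hui := hu i
      have hdi := hd i
      have hpos := hC i
      by_cases h0 : Ru i p = 0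
      · linarith [flow_le_mulVec h01d hf (hi h0)]
      · linarith [flow_le_mulVec h01u hf h0]
    · exact ⟨0, 0, fun _ => le_rfl, fun i => by simpa using (ha i).1,
        fun i => by simpa using (ha i).2, by simp, by simp⟩
    · rintro s ⟨f, hf, hu, hd, hbal, rfl⟩
      have heq : ∀ i, Ru.mulVec f i = Rd.mulVec f i := fun i => by
        have h := congrFun hbal i
        rw [Matrix.sub_mulVec] at h
        exact sub_eq_zero.1 h
      refine ⟨f, hf, fun i => ?_, fun i => ?_, hbal, rfl⟩ <;>
        linarith [hu i, hd i, heq i]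
end
end

section
/- Scaled transfer of reachable offsets: let a, b ∈ B and ε ≥ 0 satisfy ε·a ≤ b and ε·(C − a) ≤ C − b componentwise. Then for every p ∈ X_a, the state b + ε(p − a) lies in X_b. -/
/-!
A feasible flow sequence from `a`, with every flow scaled by `ε`, is feasible from `b`: after
sending flows of sum `s` from `a` and of sum `ε • s` from `b`, the two states
are `a - ΔR s` and `b - ε • ΔR s`, so `ε` times
either constraint at the former differs from the constraint at the latter by the slack
`b - ε • a ≥ 0`, respectively `(C - b) - ε • (C - a) ≥ 0`, whatever `s` is.
-/

open Finset

noncomputable section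

variable {E P : Type*}

/-- Scaled transfer of reachable offsets: if `a, b ∈ B` and `ε ≥ 0` satisfy
`ε • a ≤ b` and `ε • (C - a) ≤ C - b` componentwise, then for every `p ∈ X_a`, the state
`b + ε • (p - a)` lies in `X_b`. -/
theorem reachable_states_mapping [Fintype E] [Fintype P]
    (C : E → ℝ) (hC : ∀ i, 0 < C i) (Ru Rd : Matrix E P ℝ)
    (h01u : ∀ i p, Ru i p = 0 ∨ Ru i p = 1) (h01d : ∀ i p, Rd i p = 0 ∨ Rd i p = 1)
    (a b : E → ℝ) (ha : a ∈ Bspace C) (hb : b ∈ Bspace C)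
    (ε : ℝ) (hε : 0 ≤ ε)
    (h1 : ∀ i, ε * a i ≤ b i) (h2 : ∀ i, ε * (C i - a i) ≤ C i - b i) :
    ∀ p ∈ Reach C Ru Rd a, b + ε • (p - a) ∈ Reach C Ru Rd b := by
  rintro p ⟨k, fs, hfs, rfl⟩
  refine ⟨k, fun j => ε • fs j, fun j => ?_, ?_⟩
  · obtain ⟨hf, hu, hd⟩ := hfs j
    rw [← Finset.smul_sum, Matrix.mulVec_smul]
    refine ⟨fun q => mul_nonneg hε (hf q), fun i => ?_, fun i => ?_⟩
    · have h := mul_le_mul_of_nonneg_left (hu i) hε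
      have h1i := h1 i
      simp only [Matrix.mulVec_smul, Pi.sub_apply, Pi.smul_apply, smul_eq_mul] at h ⊢
      linarith
    · have h := mul_le_mul_of_nonneg_left (hd i) hε
      have h2i := h2 i
      simp only [Matrix.mulVec_smul, Pi.sub_apply, Pi.smul_apply, smul_eq_mul] at h ⊢
      linarith
  · rw [← Finset.smul_sum, Matrix.mulVec_smul]
    module
end
end

section
/- Monotonicity of feasible directions in the zero pattern: for states a, b ∈ B, if Z_b ⊆ Z_a, then D_a ⊆ D_b; in words, if b is imbalanced in at most the directions in which a is imbalanced, then every feasible direction at a is also feasible at b. -/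
/-!
Since `b` vanishes (or is saturated) only where `a` is, some `ε > 0` satisfies `ε a ≤ b` and
`ε (C - a) ≤ C - b` componentwise (`eventually_mul_le`). Scaling by `ε` a flow sequence that is
feasible from `a` scales both sides of every constraint, and these two inequalities turn the result
into the constraints from `b`; so the scaled sequence is feasible from `b` (`FeasSeq.smul`).
It moves `b` by `ε` times the displacement of `a`, that is, in the same direction.
-/

open Finset

noncomputable section

variable {E P : Type*}

/-- The zero pattern `Z_b`: indices of zero entries of the stacked vector `(b; C - b)`. -/
def Zset (C : E → ℝ) (b : E → ℝ) : Set (E ⊕ E) :=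
  {x | Sum.elim (fun i => b i = 0) (fun i => C i - b i = 0) x}

/-- Every small enough positive multiple of a vector lies below a nonnegative vector `y`
that vanishes only where the given one does. -/
lemma eventually_mul_le {ι : Type*} [Finite ι] (x y : ι → ℝ) (hy : ∀ i, 0 ≤ y i)
    (h : ∀ i, y i = 0 → x i = 0) :
    ∀ᶠ ε in nhdsWithin (0 : ℝ) (Set.Ioi 0), ∀ i, ε * x i ≤ y i := by
  rw [Filter.eventually_all]
  intro i
  rcases (hy i).eq_or_lt with h0 | hpos
  · simp [h i h0.symm, ← h0]
  · have hcont : Continuous fun ε : ℝ => ε * x i := by fun_prop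
    have hev : ∀ᶠ ε in nhds (0 : ℝ), ε * x i < y i :=
      hcont.continuousAt.eventually_lt_const (by simpa using hpos)
    exact (hev.filter_mono nhdsWithin_le_nhds).mono fun _ hε => hε.le

/-- The two inequalities say that both slacks at `b` dominate the `ε`-scaled slacks at `a`. -/
lemma FeasSeq.smul [Fintype P] {C : E → ℝ} {Ru Rd : Matrix E P ℝ} {a b : E → ℝ} {k : ℕ}
    {fs : Fin k → P → ℝ} (hfs : FeasSeq C Ru Rd a fs) {ε : ℝ} (hε : 0 ≤ ε)
    (hab : ∀ i, ε * a i ≤ b i) (hCab : ∀ i, ε * (C i - a i) ≤ C i - b i) :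
    FeasSeq C Ru Rd b (fun j => ε • fs j) := by
  intro j
  obtain ⟨hnonneg, hu, hd⟩ := hfs j
  refine ⟨fun p => mul_nonneg hε (hnonneg p), fun i => ?_, fun i => ?_⟩
  · have h1 := mul_le_mul_of_nonneg_left (hu i) hε
    have h2 := hab i
    simp only [← Finset.smul_sum, Matrix.mulVec_smul, Pi.sub_apply, Pi.smul_apply,
      smul_eq_mul] at h1 ⊢
    linarith
  · have h1 := mul_le_mul_of_nonneg_left (hd i) hε
    have h2 := hCab i
    simp only [← Finset.smul_sum, Matrix.mulVec_smul, Pi.sub_apply, Pi.smul_apply,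
      smul_eq_mul] at h1 ⊢
    linarith

/-- Monotonicity of feasible directions in the zero pattern: for states
`a, b ∈ B`, if `Z_b ⊆ Z_a` then `D_a ⊆ D_b`. -/
theorem dirs_mono_zero_pattern [Fintype E] [Fintype P]
    (C : E → ℝ) (hC : ∀ i, 0 < C i) (Ru Rd : Matrix E P ℝ)
    (h01u : ∀ i p, Ru i p = 0 ∨ Ru i p = 1) (h01d : ∀ i p, Rd i p = 0 ∨ Rd i p = 1)
    (a b : E → ℝ) (ha : a ∈ Bspace C) (hb : b ∈ Bspace C)
    (hZ : Zset C b ⊆ Zset C a) :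
    Dirs C Ru Rd a ⊆ Dirs C Ru Rd b := by
  rintro ξ (rfl | ⟨t, ht, k, fs, hfs, heq⟩)
  · exact Or.inl rfl
  have hev := (eventually_mul_le a b (fun i => (hb i).1) fun i hi => hZ (a := Sum.inl i) hi).and
    (eventually_mul_le (fun i => C i - a i) (fun i => C i - b i)
      (fun i => sub_nonneg.2 (hb i).2) fun i hi => hZ (a := Sum.inr i) hi)
  obtain ⟨ε, ⟨hab, hCab⟩, hε⟩ := (hev.and self_mem_nhdsWithin).exists
  have hε : 0 < ε := hε
  refine Or.inr ⟨ε * t, mul_pos hε ht, k, fun j => ε • fs j, hfs.smul hε.le hab hCab, ?_⟩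
  have hdisp : t • ξ = -(Ru - Rd).mulVec (∑ j, fs j) := by
    rw [sub_eq_add_neg] at heq
    exact add_left_cancel heq
  rw [mul_smul, hdisp, ← Finset.smul_sum, Matrix.mulVec_smul, smul_neg, ← sub_eq_add_neg]
end
end
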